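/- Fix 1 ≤ i ≤ n²/2 and j ∈ {0,1}, and let γ ∈ u be any element satisfying K^{-1}K̂·γ = q^{-2i}·γ and F·γ = β_{2i,j}. Then F^{n²−1}E^{n²−1}γ = c·E^{2i−1}α_{2i,j} for some nonzero scalar c ∈ k. -/

import Mathlib

noncomputable section

open scoped TensorProduct

namespace QFL

/-- The defining relations of the quasi-Frobenius-Lusztig kernel `ũ_q(sl₂)`,
on the free algebra on four generators `K = ι 0`, `K̂ = ι 1`, `E = ι 2`, `F = ι 3`. -/
inductive Rel (k : Type) [Field k] (n : ℕ) (q : k) :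
    FreeAlgebra k (Fin 4) → FreeAlgebra k (Fin 4) → Prop
  | Kord : Rel k n q (FreeAlgebra.ι k (0 : Fin 4) ^ n) 1
  | Khord : Rel k n q (FreeAlgebra.ι k (1 : Fin 4) ^ n)
      ((FreeAlgebra.ι k (0 : Fin 4) ^ (n - 1)) ^ 2)
  | KKh : Rel k n q (FreeAlgebra.ι k (0 : Fin 4) * FreeAlgebra.ι k (1 : Fin 4))
      (FreeAlgebra.ι k (1 : Fin 4) * FreeAlgebra.ι k (0 : Fin 4))
  | KE : Rel k n q
      (FreeAlgebra.ι k (0 : Fin 4) * FreeAlgebra.ι k (2 : Fin 4) *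
        FreeAlgebra.ι k (0 : Fin 4) ^ (n - 1))
      (q ^ n • FreeAlgebra.ι k (2 : Fin 4))
  | KF : Rel k n q
      (FreeAlgebra.ι k (0 : Fin 4) * FreeAlgebra.ι k (3 : Fin 4) *
        FreeAlgebra.ι k (0 : Fin 4) ^ (n - 1))
      ((q ^ n)⁻¹ • FreeAlgebra.ι k (3 : Fin 4))
  | KhE : Rel k n q
      (FreeAlgebra.ι k (1 : Fin 4) * FreeAlgebra.ι k (2 : Fin 4) *
        FreeAlgebra.ι k (1 : Fin 4) ^ (n ^ 2 - 1))
      ((q ^ n * (q ^ 2)⁻¹) • FreeAlgebra.ι k (2 : Fin 4))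
  | KhF : Rel k n q
      (FreeAlgebra.ι k (1 : Fin 4) * FreeAlgebra.ι k (3 : Fin 4) *
        FreeAlgebra.ι k (1 : Fin 4) ^ (n ^ 2 - 1))
      (((q ^ n)⁻¹ * q ^ 2) • FreeAlgebra.ι k (3 : Fin 4))
  | Enil : Rel k n q (FreeAlgebra.ι k (2 : Fin 4) ^ n ^ 2) 0
  | Fnil : Rel k n q (FreeAlgebra.ι k (3 : Fin 4) ^ n ^ 2) 0
  | EF : Rel k n q
      (FreeAlgebra.ι k (3 : Fin 4) * FreeAlgebra.ι k (2 : Fin 4) -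
        q⁻¹ • (FreeAlgebra.ι k (2 : Fin 4) * FreeAlgebra.ι k (3 : Fin 4)))
      (1 - FreeAlgebra.ι k (0 : Fin 4) ^ (n - 1) * FreeAlgebra.ι k (1 : Fin 4))

/-- The algebra `ũ_q(sl₂)` as the quotient of the free algebra by the defining relations. -/
abbrev U (k : Type) [Field k] (n : ℕ) (q : k) := RingQuot (Rel k n q)

variable (k : Type) [Field k] (n : ℕ) (q : k)

def K : U k n q := RingQuot.mkAlgHom k (Rel k n q) (FreeAlgebra.ι k (0 : Fin 4))
def Kh : U k n q := RingQuot.mkAlgHom k (Rel k n q) (FreeAlgebra.ι k (1 : Fin 4))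
def E : U k n q := RingQuot.mkAlgHom k (Rel k n q) (FreeAlgebra.ι k (2 : Fin 4))
def F : U k n q := RingQuot.mkAlgHom k (Rel k n q) (FreeAlgebra.ι k (3 : Fin 4))

/-- `K⁻¹ = K^(n-1)`. -/
def Kinv : U k n q := K k n q ^ (n - 1)
/-- `K̂⁻¹ = K̂^(n²-1)`. -/
def Khinv : U k n q := Kh k n q ^ (n ^ 2 - 1)

/-- `φ_{2i} = (2/n²) Σ_{t<n²/2} q^{-2it} (K⁻¹K̂)^t`. -/
def phi (i : ℕ) : U k n q :=
  ((n ^ 2 : k)⁻¹ * 2) • ∑ t ∈ Finset.range (n ^ 2 / 2),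
    (q⁻¹ ^ (2 * i * t)) • (Kinv k n q * Kh k n q) ^ t

/-- `𝟙₀ = (1/2)(1 + KK̂^(n/2))` and `𝟙₁ = (1/2)(1 - KK̂^(n/2))`. -/
def oneJ (j : ℕ) : U k n q :=
  if j = 0 then (2 : k)⁻¹ • (1 + K k n q * Kh k n q ^ (n / 2))
  else (2 : k)⁻¹ • (1 - K k n q * Kh k n q ^ (n / 2))

/-- The idempotent `e_{2i,j} = φ_{2i} 𝟙_j`. -/
def eIdem (i j : ℕ) : U k n q := phi k n q i * oneJ k n q j

/-- `α_{2i,j} = F^(n²-1) e_{2i,j}`. -/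
def alpha (i j : ℕ) : U k n q := F k n q ^ (n ^ 2 - 1) * eIdem k n q i j

/-- `β_{2i,j} = E^(2i-2) α_{2i,j}`. -/
def beta (i j : ℕ) : U k n q := E k n q ^ (2 * i - 2) * alpha k n q i j

/-- The Gaussian number `s_q = 1 + q + ⋯ + q^(s-1)`. -/
def gauss (x : k) (s : ℕ) : k := ∑ t ∈ Finset.range s, x ^ t

/-- The span of the PBW-type monomials `F^a K^c K̂^d E^b` with `a ≤ n²-2`, `b ≤ n²-1`,
`c ≤ n-1`, `d ≤ n²-1`. -/
def pbw : Submodule k (U k n q) :=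
  Submodule.span k {x | ∃ a b c d : ℕ, a ≤ n ^ 2 - 2 ∧ b ≤ n ^ 2 - 1 ∧ c ≤ n - 1 ∧
    d ≤ n ^ 2 - 1 ∧ x = F k n q ^ a * K k n q ^ c * Kh k n q ^ d * E k n q ^ b}

/-- `γ_{2i,j}`: the unique element of the PBW span with `F·γ = β_{2i,j}`. -/
def gam (i j : ℕ) : U k n q :=
  @dite _ (∃! x, x ∈ pbw k n q ∧ F k n q * x = beta k n q i j)
    (Classical.propDecidable _) (fun h => h.choose) (fun _ => 0)

/-- The left ideal `P_{2i,j} = u·γ_{2i,j}`. -/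
def P (i j : ℕ) : Submodule (U k n q) (U k n q) :=
  Submodule.span (U k n q) {gam k n q i j}

/-- `S_{2i,j} = Soc(P_{2i,j})`, the sum of all simple submodules of `P_{2i,j}`. -/
def S (i j : ℕ) : Submodule (U k n q) (U k n q) :=
  sSup {N : Submodule (U k n q) (U k n q) | N ≤ P k n q i j ∧ IsSimpleModule (U k n q) N}

end QFL

/-!
Write `L = K⁻¹K̂`, `p = q⁻¹`, `N = n²`, `r = 2i`. On an `L`-eigenvector `x` of weight `c`,
`F E^(s+1) x = p^(s+1) E^(s+1) F x + [s+1]_p (1 - p^s c) E^s x`, so wherever the first term vanishes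
`F` undoes `E` up to a scalar, which for `s + 1 < N` is zero only if `p^s c = 1`. Going down from
`E^(N-1) γ`, the nilpotency of `E` kills the first term for `r - 2` steps, down to `E^(N+1-r) γ`. At
that point the scalar is zero, and the first term survives instead: the next `F` crosses over to
`E^(N+1-r) F γ = E^(N-1) α`. Since `F α = 0`, the remaining applications of `F` go down the string
of `α`, and they stop at `E^(r-1) α`, just before the scalar would vanish a second time.
-/

namespace QFL

section Semiconj

variable {R A M : Type*}

lemma semiconjBy_of_mul_mul_pow_pred [Monoid A] {g x y : A} {m : ℕ} (hm : m ≠ 0) (hg : g ^ m = 1)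
    (h : g * x * g ^ (m - 1) = y) : SemiconjBy g x y := by
  rw [SemiconjBy, ← h, mul_assoc, pow_sub_one_mul hm, hg, mul_one]

lemma semiconjBy_pow_pred_symm [Monoid A] {g x y : A} {m : ℕ} (hm : m ≠ 0) (hg : g ^ m = 1)
    (h : SemiconjBy g x y) : SemiconjBy (g ^ (m - 1)) y x := by
  simpa using SemiconjBy.units_inv_symm_left (a := Units.ofPowEqOne g m hg hm) h

lemma smul_pow_smul_of_semiconjBy [CommSemiring R] [Semiring A] [Algebra R A] [AddCommMonoid M]
    [Module R M] [Module A M] [IsScalarTower R A M] {g y : A} {a c : R} {x : M}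
    (h : SemiconjBy g y (a • y)) (hx : g • x = c • x) (s : ℕ) :
    g • y ^ s • x = (a ^ s * c) • y ^ s • x := by
  rw [← mul_smul, (h.pow_right s).eq, mul_smul, hx, smul_pow, smul_assoc, smul_comm (y ^ s) c,
    mul_smul]

lemma mul_geom_sum_of_pow_eq_one [Ring A] {x : A} {m : ℕ} (hx : x ^ m = 1) :
    x * ∑ t ∈ Finset.range m, x ^ t = ∑ t ∈ Finset.range m, x ^ t := by
  have h := mul_geom_sum x m
  rwa [hx, sub_self, sub_mul, one_mul, sub_eq_zero] at h

lemma geom_sum_ne_zero_of_pow_ne_one [Ring A] {x : A} {m : ℕ} (hx : x ^ m ≠ 1) :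
    ∑ t ∈ Finset.range m, x ^ t ≠ 0 := fun h =>
  hx <| sub_eq_zero.mp <| by rw [← mul_geom_sum, h, mul_zero]

end Semiconj

section Ladder

variable {R A M : Type*} [CommRing R] [Ring A] [Algebra R A]

/-- The relations of quantum `sl₂` at the parameter `p` that determine how `F` acts on the string
`x, E x, E² x, …` of an eigenvector `x` of `L`. In `ũ_q(sl₂)` they hold for `L = K⁻¹K̂` and
`p = q⁻¹`. -/
structure IsLadderTriple (p : R) (L E F : A) : Prop where
  semiconjBy : SemiconjBy L E (p ^ 2 • E)
  F_mul_E_sub : F * E - p • (E * F) = 1 - L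

/-- The scalar `[s+1]_p (1 - p^s c)` relating `F E^(s+1) x` to `E^s x` on the string of an
eigenvector `x` of weight `c`. -/
def ladderCoeff (p c : R) (s : ℕ) : R :=
  (∑ t ∈ Finset.range (s + 1), p ^ t) * (1 - p ^ s * c)

lemma ladderCoeff_zero (p c : R) : ladderCoeff p c 0 = 1 - c := by
  simp [ladderCoeff]

lemma ladderCoeff_succ (p c : R) (s : ℕ) :
    ladderCoeff p c (s + 1) = p * ladderCoeff p c s + (1 - (p ^ 2) ^ (s + 1) * c) := by
  have h_low := geom_sum_succ (x := p) (n := s + 1)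
  have h_high := Finset.sum_range_succ (fun t => p ^ t) (s + 1)
  rw [ladderCoeff, ladderCoeff]
  linear_combination h_low - p ^ (s + 1) * c * h_high

lemma ladderCoeff_eq_zero {p c : R} {s : ℕ} (h : p ^ s * c = 1) : ladderCoeff p c s = 0 := by
  rw [ladderCoeff, h, sub_self, mul_zero]

lemma ladderCoeff_ne_zero [NoZeroDivisors R] {p c : R} {s : ℕ} (hp : p ^ (s + 1) ≠ 1)
    (hc : p ^ s * c ≠ 1) : ladderCoeff p c s ≠ 0 :=
  mul_ne_zero (geom_sum_ne_zero_of_pow_ne_one hp) (sub_ne_zero.mpr hc.symm)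

namespace IsLadderTriple

variable [AddCommGroup M] [Module R M] [Module A M] [IsScalarTower R A M]
  {p c : R} {L E F : A} {x : M}

lemma F_smul_E_smul (h : IsLadderTriple p L E F) (x : M) :
    F • E • x = p • E • F • x + (x - L • x) := by
  rw [← mul_smul, sub_eq_iff_eq_add'.mp h.F_mul_E_sub, add_smul, smul_assoc, mul_smul, sub_smul,
    one_smul]

lemma F_smul_E_pow_succ_smul (h : IsLadderTriple p L E F) (hx : L • x = c • x) (s : ℕ) :
    F • E ^ (s + 1) • x = p ^ (s + 1) • E ^ (s + 1) • F • x + ladderCoeff p c s • E ^ s • x := by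
  induction s with
  | zero => simp [h.F_smul_E_smul, hx, ladderCoeff_zero, sub_smul]
  | succ s ih =>
    have E_smul_E_pow (m : ℕ) (y : M) : E • E ^ m • y = E ^ (m + 1) • y := by
      rw [smul_smul, pow_succ']
    rw [← E_smul_E_pow, h.F_smul_E_smul, ih, smul_pow_smul_of_semiconjBy h.semiconjBy hx,
      ladderCoeff_succ, smul_add, smul_comm E (p ^ (s + 1)), smul_comm E (ladderCoeff p c s),
      E_smul_E_pow, E_smul_E_pow, smul_add, smul_smul p, smul_smul p, ← pow_succ', add_smul,
      sub_smul, one_smul, add_assoc]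

lemma F_pow_smul_E_pow_smul (h : IsLadderTriple p L E F) (hx : L • x = c • x) {a : ℕ}
    (hFx : E ^ (a + 1) • F • x = 0) (d : ℕ) :
    F ^ d • E ^ (a + d) • x = (∏ s ∈ Finset.range d, ladderCoeff p c (a + s)) • E ^ a • x := by
  induction d with
  | zero => simp
  | succ d ih =>
    have hEFx : E ^ (a + d + 1) • F • x = 0 := by
      rw [show a + d + 1 = d + (a + 1) by ring, pow_add, mul_smul, hFx, smul_zero]
    rw [pow_succ, mul_smul, ← add_assoc, h.F_smul_E_pow_succ_smul hx, hEFx, smul_zero, zero_add,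
      smul_comm (F ^ d), ih, smul_smul, Finset.prod_range_succ, mul_comm]

lemma exists_ne_zero_F_pow_smul_E_pow_smul [IsDomain R] (h : IsLadderTriple p L E F) {N : ℕ}
    (hp : IsPrimitiveRoot p N) (hx : L • x = c • x) {a d : ℕ} (hac : p ^ a * c = p)
    (hd : a + d < N) (hFx : E ^ (a + 1) • F • x = 0) :
    ∃ b : R, b ≠ 0 ∧ F ^ d • E ^ (a + d) • x = b • E ^ a • x := by
  refine ⟨_, Finset.prod_ne_zero_iff.mpr fun s hs => ?_, h.F_pow_smul_E_pow_smul hx hFx d⟩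
  have hs : s < d := Finset.mem_range.mp hs
  have hweight : p ^ (a + s) * c = p ^ (s + 1) := by
    rw [pow_add, mul_right_comm, hac, pow_succ']
  exact ladderCoeff_ne_zero (hp.pow_ne_one_of_pos_of_lt (by omega) (by omega))
    (hweight ▸ hp.pow_ne_one_of_pos_of_lt (by omega) (by omega))

theorem exists_ne_zero_F_pow_pred_smul_E_pow_pred_smul [IsDomain R] (h : IsLadderTriple p L E F)
    {N r : ℕ} (hp : IsPrimitiveRoot p N) (hr : 2 ≤ r) (hrN : r ≤ N) {α γ : M} {μ : R}
    (hE : E ^ N • α = 0) (hμ : p ^ (r - 2) * μ = 1) (hα : L • α = μ • α) (hFα : F • α = 0)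
    (hγ : L • γ = p ^ r • γ) (hFγ : F • γ = E ^ (r - 2) • α) :
    ∃ b : R, b ≠ 0 ∧ F ^ (N - 1) • E ^ (N - 1) • γ = b • E ^ (r - 1) • α := by
  obtain ⟨m, rfl⟩ := Nat.exists_eq_add_of_le' hr
  obtain ⟨d, rfl⟩ := Nat.exists_eq_add_of_le hrN
  simp only [show m + 2 - 2 = m by omega, show m + 2 - 1 = m + 1 by omega] at hμ hFγ ⊢
  have hweight : p ^ (d + 1) * p ^ (m + 2) = p := by
    rw [← pow_add, show d + 1 + (m + 2) = m + 2 + d + 1 by ring, pow_succ, hp.pow_eq_one, one_mul]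
  have hnil : E ^ (d + 1 + 1) • F • γ = 0 := by
    rw [hFγ, ← mul_smul, ← pow_add, show d + 1 + 1 + m = m + 2 + d by ring, hE]
  obtain ⟨b, hb, hγ_string⟩ :=
    h.exists_ne_zero_F_pow_smul_E_pow_smul hp hγ (d := m) hweight (by omega) hnil
  have hcross : F • E ^ (d + 1) • γ = p ^ (d + 1) • E ^ (m + 1 + d) • α := by
    have hzero : ladderCoeff p (p ^ (m + 2)) d = 0 :=
      ladderCoeff_eq_zero (by rw [← pow_add, add_comm, hp.pow_eq_one])
    rw [h.F_smul_E_pow_succ_smul hγ, hFγ, hzero, zero_smul, add_zero, smul_smul (E ^ (d + 1)),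
      ← pow_add, show d + 1 + m = m + 1 + d by ring]
  obtain ⟨b', hb', hα_string⟩ := h.exists_ne_zero_F_pow_smul_E_pow_smul hp hα (a := m + 1) (d := d)
    (by rw [pow_succ', mul_assoc, hμ, mul_one]) (by omega) (by rw [hFα, smul_zero])
  have hp0 : p ≠ 0 := hp.ne_zero (by omega)
  refine ⟨b * p ^ (d + 1) * b', mul_ne_zero (mul_ne_zero hb (pow_ne_zero _ hp0)) hb', ?_⟩
  calc F ^ (m + 2 + d - 1) • E ^ (m + 2 + d - 1) • γ
      = F ^ d • F • F ^ m • E ^ (d + 1 + m) • γ := by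
        rw [show m + 2 + d - 1 = d + 1 + m by omega, ← mul_smul F, ← mul_smul (F ^ d), ← pow_succ',
          ← pow_add, show d + (m + 1) = d + 1 + m by ring]
    _ = b • F ^ d • F • E ^ (d + 1) • γ := by rw [hγ_string, smul_comm F, smul_comm (F ^ d)]
    _ = (b * p ^ (d + 1)) • F ^ d • E ^ (m + 1 + d) • α := by
        rw [hcross, smul_comm (F ^ d), mul_smul]
    _ = (b * p ^ (d + 1) * b') • E ^ (m + 1) • α := by rw [hα_string, smul_smul]

end IsLadderTriple

end Ladder

section Relations

variable (k : Type) [Field k] (n : ℕ) (q : k)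

lemma K_pow : K k n q ^ n = 1 := by
  simpa only [map_pow, map_one, K] using
    RingQuot.mkAlgHom_rel k (Rel.Kord (k := k) (n := n) (q := q))

lemma Kh_pow : Kh k n q ^ n = Kinv k n q ^ 2 := by
  simpa only [map_pow, Kinv, K, Kh] using
    RingQuot.mkAlgHom_rel k (Rel.Khord (k := k) (n := n) (q := q))

lemma commute_K_Kh : Commute (K k n q) (Kh k n q) := by
  simpa only [map_mul, Commute, SemiconjBy, K, Kh] using
    RingQuot.mkAlgHom_rel k (Rel.KKh (k := k) (n := n) (q := q))

lemma E_pow : E k n q ^ n ^ 2 = 0 := by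
  simpa only [map_pow, map_zero, E] using
    RingQuot.mkAlgHom_rel k (Rel.Enil (k := k) (n := n) (q := q))

lemma F_pow : F k n q ^ n ^ 2 = 0 := by
  simpa only [map_pow, map_zero, F] using
    RingQuot.mkAlgHom_rel k (Rel.Fnil (k := k) (n := n) (q := q))

lemma F_mul_E_sub :
    F k n q * E k n q - q⁻¹ • (E k n q * F k n q) = 1 - Kinv k n q * Kh k n q := by
  simpa only [map_mul, map_pow, map_smul, map_sub, map_one, Kinv, K, Kh, E, F] using
    RingQuot.mkAlgHom_rel k (Rel.EF (k := k) (n := n) (q := q))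

lemma Kinv_pow : Kinv k n q ^ n = 1 := by
  rw [Kinv, pow_right_comm, K_pow, one_pow]

lemma Kh_pow_sq : Kh k n q ^ n ^ 2 = 1 := by
  rw [sq, pow_mul, Kh_pow, pow_right_comm, Kinv_pow, one_pow]

lemma Kinv_mul_Kh_pow_half (h2 : 2 ∣ n) : (Kinv k n q * Kh k n q) ^ (n ^ 2 / 2) = 1 := by
  have hcomm : Commute (Kinv k n q) (Kh k n q) := (commute_K_Kh k n q).pow_left _
  rw [sq, Nat.mul_div_assoc n h2, pow_mul, hcomm.mul_pow, Kinv_pow, Kh_pow, one_mul, ← pow_mul,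
    Nat.mul_div_cancel' h2, Kinv_pow]

variable {k n q}

lemma semiconjBy_Kinv_mul_Kh {x : U k n q} {a b : k} (hn : n ≠ 0)
    (hK : K k n q * x * K k n q ^ (n - 1) = a • x)
    (hKh : Kh k n q * x * Kh k n q ^ (n ^ 2 - 1) = (a * b) • x) :
    SemiconjBy (Kinv k n q * Kh k n q) x (b • x) := by
  have hK_semiconj := semiconjBy_of_mul_mul_pow_pred hn (K_pow k n q) hK
  have hKinv : SemiconjBy (Kinv k n q) (a • x) x :=
    semiconjBy_pow_pred_symm hn (K_pow k n q) hK_semiconj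
  refine SemiconjBy.mul_left ?_
    (semiconjBy_of_mul_mul_pow_pred (pow_ne_zero 2 hn) (Kh_pow_sq k n q) hKh)
  rw [mul_comm a, mul_smul]
  exact hKinv.smul_right b

lemma semiconjBy_Kinv_mul_Kh_E (hn : n ≠ 0) :
    SemiconjBy (Kinv k n q * Kh k n q) (E k n q) (q⁻¹ ^ 2 • E k n q) := by
  rw [inv_pow]
  refine semiconjBy_Kinv_mul_Kh (a := q ^ n) hn ?_ ?_
  · simpa only [map_mul, map_pow, map_smul, K, E] using
    RingQuot.mkAlgHom_rel k (Rel.KE (k := k) (n := n) (q := q))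
  · simpa only [map_mul, map_pow, map_smul, Kh, E] using
    RingQuot.mkAlgHom_rel k (Rel.KhE (k := k) (n := n) (q := q))

lemma semiconjBy_Kinv_mul_Kh_F (hn : n ≠ 0) :
    SemiconjBy (Kinv k n q * Kh k n q) (F k n q) (q ^ 2 • F k n q) := by
  refine semiconjBy_Kinv_mul_Kh (a := (q ^ n)⁻¹) hn ?_ ?_
  · simpa only [map_mul, map_pow, map_smul, K, F] using
    RingQuot.mkAlgHom_rel k (Rel.KF (k := k) (n := n) (q := q))
  · simpa only [map_mul, map_pow, map_smul, Kh, F] using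
    RingQuot.mkAlgHom_rel k (Rel.KhF (k := k) (n := n) (q := q))

lemma isLadderTriple_Kinv_mul_Kh (hn : n ≠ 0) :
    IsLadderTriple q⁻¹ (Kinv k n q * Kh k n q) (E k n q) (F k n q) :=
  ⟨semiconjBy_Kinv_mul_Kh_E hn, F_mul_E_sub k n q⟩

lemma Kinv_mul_Kh_mul_phi (h2 : 2 ∣ n) (hq : q ^ n ^ 2 = 1) (i : ℕ) :
    Kinv k n q * Kh k n q * phi k n q i = q ^ (2 * i) • phi k n q i := by
  obtain rfl | hn := eq_or_ne n 0
  · simp [phi]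
  have hq0 : q ≠ 0 := by
    rintro rfl
    simp [hn] at hq
  set L := Kinv k n q * Kh k n q with hL
  have hphi : phi k n q i = ((n ^ 2 : k)⁻¹ * 2) •
      ∑ t ∈ Finset.range (n ^ 2 / 2), (q⁻¹ ^ (2 * i) • L) ^ t := by
    simp only [phi, smul_pow, ← pow_mul, hL]
  have hpow : (q⁻¹ ^ (2 * i) • L) ^ (n ^ 2 / 2) = 1 := by
    rw [smul_pow, Kinv_mul_Kh_pow_half k n q h2, mul_comm 2 i, ← pow_mul, mul_assoc,
      Nat.mul_div_cancel' (dvd_pow h2 two_ne_zero), pow_mul', inv_pow, hq, inv_one, one_pow,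
      one_smul]
  have hfix : (q⁻¹ ^ (2 * i) • L) * phi k n q i = phi k n q i := by
    rw [hphi, mul_smul_comm, mul_geom_sum_of_pow_eq_one hpow]
  rw [smul_mul_assoc, inv_pow] at hfix
  exact (inv_smul_eq_iff₀ (pow_ne_zero _ hq0)).mp hfix

lemma Kinv_mul_Kh_mul_eIdem (h2 : 2 ∣ n) (hq : q ^ n ^ 2 = 1) (i j : ℕ) :
    Kinv k n q * Kh k n q * eIdem k n q i j = q ^ (2 * i) • eIdem k n q i j := by
  rw [eIdem, ← mul_assoc, Kinv_mul_Kh_mul_phi h2 hq, smul_mul_assoc]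

end Relations

end QFL

open QFL in
theorem statement4_general {k : Type} [Field k] {n : ℕ} {q : k} (hq : IsPrimitiveRoot q (n ^ 2))
    {r : ℕ} (hr : 2 ≤ r) (hrn : r ≤ n ^ 2) {e γ : U k n q}
    (he : Kinv k n q * Kh k n q * e = q ^ r • e)
    (hγ : Kinv k n q * Kh k n q * γ = q⁻¹ ^ r • γ)
    (hFγ : F k n q * γ = E k n q ^ (r - 2) * (F k n q ^ (n ^ 2 - 1) * e)) :
    ∃ c : k, c ≠ 0 ∧ F k n q ^ (n ^ 2 - 1) * (E k n q ^ (n ^ 2 - 1) * γ) =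
      c • (E k n q ^ (r - 1) * (F k n q ^ (n ^ 2 - 1) * e)) := by
  have hn : n ≠ 0 := by rintro rfl; omega
  have hq0 : q ≠ 0 := hq.ne_zero (by omega)
  have hα : (Kinv k n q * Kh k n q) • F k n q ^ (n ^ 2 - 1) • e =
      ((q ^ 2) ^ (n ^ 2 - 1) * q ^ r) • F k n q ^ (n ^ 2 - 1) • e :=
    smul_pow_smul_of_semiconjBy (semiconjBy_Kinv_mul_Kh_F hn) he (n ^ 2 - 1)
  have hEα : E k n q ^ n ^ 2 * (F k n q ^ (n ^ 2 - 1) * e) = 0 := by rw [E_pow, zero_mul]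
  have hFα : F k n q * (F k n q ^ (n ^ 2 - 1) * e) = 0 := by
    rw [← mul_assoc, mul_pow_sub_one (pow_ne_zero 2 hn), F_pow, zero_mul]
  have hweight : q⁻¹ ^ (r - 2) * ((q ^ 2) ^ (n ^ 2 - 1) * q ^ r) = 1 := by
    rw [← pow_mul, ← pow_add, show 2 * (n ^ 2 - 1) + r = n ^ 2 * 2 + (r - 2) by omega, pow_add,
      pow_mul, hq.pow_eq_one, one_pow, one_mul, ← mul_pow, inv_mul_cancel₀ hq0, one_pow]
  exact (isLadderTriple_Kinv_mul_Kh hn).exists_ne_zero_F_pow_pred_smul_E_pow_pred_smul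
    (M := U k n q) (α := F k n q ^ (n ^ 2 - 1) * e) (γ := γ) hq.inv hr hrn hEα hweight hα hFα hγ hFγ

open QFL in
/-- Corollary 2.7: `F^(n²-1) E^(n²-1) γ` is a nonzero multiple of `E^(2i-1) α_{2i,j}`. -/
theorem statement4 (k : Type) [Field k] [IsAlgClosed k] [CharZero k]
    (n : ℕ) (hn : 0 < n) (h4 : 4 ∣ n) (q : k) (hq : IsPrimitiveRoot q (n ^ 2))
    (i j : ℕ) (hi1 : 1 ≤ i) (hi2 : i ≤ n ^ 2 / 2) (hj : j ≤ 1)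
    (γ : U k n q)
    (hγ1 : (Kinv k n q * Kh k n q) * γ = (q ^ (-(2 * (i : ℤ)))) • γ)
    (hγ2 : F k n q * γ = beta k n q i j) :
    ∃ c : k, c ≠ 0 ∧
      F k n q ^ (n ^ 2 - 1) * (E k n q ^ (n ^ 2 - 1) * γ) =
        c • (E k n q ^ (2 * i - 1) * alpha k n q i j) := by
  have h2 : 2 ∣ n := dvd_trans (by norm_num) h4
  have he := Kinv_mul_Kh_mul_eIdem h2 hq.pow_eq_one i j
  exact statement4_general hq (by omega) (by omega) he
    (by rw [hγ1, zpow_neg, inv_pow]; norm_cast) hγ2
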